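/- Let Â = â⊗b̂⊗ĉ with ‖â‖ = ‖b̂‖ = 1. For k ∈ [n3] and 1 ≤ s < t ≤ m_k define ẑ_{s,t,k} ∈ ℝ^{n1+n2} by ẑ_{s,t,k} = √2·ĉ_k·( â_{i_s} b̂_{j_s} b̂_{j_t} e_{i_t} − â_{i_t} b̂_{j_t} b̂_{j_s} e_{i_s} ; â_{i_s} b̂_{j_s} â_{i_t} e_{j_t} − â_{i_t} b̂_{j_t} â_{i_s} e_{j_s} ), where (i_s,j_s),(i_t,j_t) are the enumerated elements of Ω_k. Let Z be the matrix whose rows are all vectors ẑ_{s,t,k}ᵀ together with the two rows (âᵀ, 0) and (0, b̂ᵀ). Assume (i) rank Z = n1 + n2, and (ii) the only pairs (a,b) with ‖a‖ = ‖b‖ = 1 satisfying Â_{i_s j_s k} a_{i_t} b_{j_t} − Â_{i_t j_t k} a_{i_s} b_{j_s} = 0 for all k ∈ [n3] and all 1 ≤ s < t ≤ m_k are the four pairs (±â, ±b̂). Then there exist constants C1 > 0 and ε > 0 such that for every tensor A ∈ ℝ^{n1×n2×n3} with ‖A − Â‖_Ω ≤ ε and every global minimizer (a*, b*) of f_A over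 {(a,b) : ‖a‖ = ‖b‖ = 1}, there is θ ∈ {1, −1} with ‖a*⊗b* − θ·(â⊗b̂)‖ ≤ C1·‖A − Â‖_Ω. -/

import Mathlib

open Finset Matrix

noncomputable section

/-- The biquadratic objective `f_A(a,b)` of the rank-1 completion problem. -/
def fA {n1 n2 n3 : ℕ} (m : Fin n3 → ℕ)
    (I : (k : Fin n3) → Fin (m k) → Fin n1) (J : (k : Fin n3) → Fin (m k) → Fin n2)
    (A : Fin n1 → Fin n2 → Fin n3 → ℝ) (a : Fin n1 → ℝ) (b : Fin n2 → ℝ) : ℝ :=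
  ∑ k : Fin n3, ∑ s : Fin (m k), ∑ t : Fin (m k),
    if s < t then
      (A (I k s) (J k s) k * a (I k t) * b (J k t)
        - A (I k t) (J k t) k * a (I k s) * b (J k s)) ^ 2
    else 0

/-- `‖D‖_Ω`, the norm over the observed index set `Ω` (given by its slice enumerations). -/
def normOmega {n1 n2 n3 : ℕ} (m : Fin n3 → ℕ)
    (I : (k : Fin n3) → Fin (m k) → Fin n1) (J : (k : Fin n3) → Fin (m k) → Fin n2)
    (D : Fin n1 → Fin n2 → Fin n3 → ℝ) : ℝ :=
  Real.sqrt (∑ k : Fin n3, ∑ s : Fin (m k), (D (I k s) (J k s) k) ^ 2)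


/-- Each squared residual is at most the objective. -/
lemma term_sq_le_fA {n1 n2 n3 : ℕ} (m : Fin n3 → ℕ)
    (I : (k : Fin n3) → Fin (m k) → Fin n1) (J : (k : Fin n3) → Fin (m k) → Fin n2)
    (A : Fin n1 → Fin n2 → Fin n3 → ℝ) (a : Fin n1 → ℝ) (b : Fin n2 → ℝ)
    (k : Fin n3) (s t : Fin (m k)) (hst : s < t) :
    (A (I k s) (J k s) k * a (I k t) * b (J k t)
        - A (I k t) (J k t) k * a (I k s) * b (J k s)) ^ 2 ≤ fA m I J A a b := by
  unfold fA
  have h0 : ∀ (k : Fin n3) (s t : Fin (m k)), 0 ≤ (if s < t then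
      (A (I k s) (J k s) k * a (I k t) * b (J k t)
        - A (I k t) (J k t) k * a (I k s) * b (J k s)) ^ 2 else 0) := by
    intro k s t
    split_ifs <;> positivity
  refine le_trans ?_ (Finset.single_le_sum (fun k _ => Finset.sum_nonneg
    (fun s _ => Finset.sum_nonneg (fun t _ => h0 k s t))) (Finset.mem_univ k))
  refine le_trans ?_ (Finset.single_le_sum (fun s _ => Finset.sum_nonneg
    (fun t _ => h0 k s t)) (Finset.mem_univ s))
  refine le_trans ?_ (Finset.single_le_sum (fun t _ => h0 k s t) (Finset.mem_univ t))
  rw [if_pos hst]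

/-- A uniform bound on the residuals bounds the objective. -/
lemma fA_le {n1 n2 n3 : ℕ} (m : Fin n3 → ℕ)
    (I : (k : Fin n3) → Fin (m k) → Fin n1) (J : (k : Fin n3) → Fin (m k) → Fin n2)
    (A : Fin n1 → Fin n2 → Fin n3 → ℝ) (a : Fin n1 → ℝ) (b : Fin n2 → ℝ)
    (B : ℝ)
    (h : ∀ (k : Fin n3) (s t : Fin (m k)), s < t →
      |A (I k s) (J k s) k * a (I k t) * b (J k t)
        - A (I k t) (J k t) k * a (I k s) * b (J k s)| ≤ B) :
    fA m I J A a b ≤ (∑ k : Fin n3, (m k : ℝ) ^ 2) * B ^ 2 := by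
  unfold fA
  rw [Finset.sum_mul]
  refine Finset.sum_le_sum fun k _ => ?_
  have : (m k : ℝ) ^ 2 * B ^ 2 = ∑ s : Fin (m k), ∑ t : Fin (m k), B ^ 2 := by
    simp; ring
  rw [this]
  refine Finset.sum_le_sum fun s _ => Finset.sum_le_sum fun t _ => ?_
  split_ifs with hst
  · exact sq_le_sq' (by have := (abs_le.1 (h k s t hst)).1; linarith) (abs_le.1 (h k s t hst)).2
  · positivity

lemma abs_le_normOmega {n1 n2 n3 : ℕ} (m : Fin n3 → ℕ)
    (I : (k : Fin n3) → Fin (m k) → Fin n1) (J : (k : Fin n3) → Fin (m k) → Fin n2)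
    (D : Fin n1 → Fin n2 → Fin n3 → ℝ) (k : Fin n3) (s : Fin (m k)) :
    |D (I k s) (J k s) k| ≤ normOmega m I J D := by
  unfold normOmega
  apply Real.abs_le_sqrt
  refine le_trans ?_ (Finset.single_le_sum (fun k _ => Finset.sum_nonneg
    (fun s _ => sq_nonneg _)) (Finset.mem_univ k))
  exact Finset.single_le_sum (f := fun s => (D (I k s) (J k s) k) ^ 2)
    (fun s _ => sq_nonneg _) (Finset.mem_univ s)

lemma coord_le {n : ℕ} (x : EuclideanSpace ℝ (Fin n)) (i : Fin n) : |x i| ≤ ‖x‖ := by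
  simpa using PiLp.norm_apply_le x i

lemma abs_resid_le (p q x y u v δ : ℝ) (hp : |p| ≤ δ) (hq : |q| ≤ δ)
    (hx : |x| ≤ 1) (hy : |y| ≤ 1) (hu : |u| ≤ 1) (hv : |v| ≤ 1) :
    |p * x * y - q * u * v| ≤ 2 * δ := by
  have hδ : 0 ≤ δ := (abs_nonneg _).trans hp
  have h1 : |p * x * y| ≤ δ * 1 * 1 := by
    rw [abs_mul, abs_mul]; gcongr
  have h2 : |q * u * v| ≤ δ * 1 * 1 := by
    rw [abs_mul, abs_mul]; gcongr
  have := abs_sub (p * x * y) (q * u * v)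
  linarith

lemma self_inner_sub {n : ℕ} (x y : EuclideanSpace ℝ (Fin n)) (hx : ‖x‖ = 1) (hy : ‖y‖ = 1) :
    ∑ i, x i * (y i - x i) = - (∑ i, (y i - x i) ^ 2) / 2 := by
  have h1 : ∑ i, x i ^ 2 = 1 := by
    rw [← EuclideanSpace.real_norm_sq_eq, hx]; norm_num
  have h2 : ∑ i, y i ^ 2 = 1 := by
    rw [← EuclideanSpace.real_norm_sq_eq, hy]; norm_num
  have : ∑ i, (2 * (x i * (y i - x i)) + (y i - x i) ^ 2 + x i ^ 2 - y i ^ 2) = 0 :=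
    Finset.sum_eq_zero (fun i _ => by ring)
  rw [Finset.sum_sub_distrib, Finset.sum_add_distrib, Finset.sum_add_distrib,
    ← Finset.mul_sum, h1, h2] at this
  linarith

/-- Full column rank gives a lower bound in the sup norm. -/
lemma exists_lower_bound {α β : Type*} [Fintype α] [Fintype β] [DecidableEq β]
    (Z : Matrix α β ℝ) (h : Z.rank = Fintype.card β) :
    ∃ K : ℝ, 0 < K ∧ ∀ w : β → ℝ, ‖w‖ ≤ K * ‖Z *ᵥ w‖ := by
  have hker : LinearMap.ker Z.mulVecLin = ⊥ := by
    have := LinearMap.finrank_range_add_finrank_ker Z.mulVecLin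
    rw [← Matrix.rank, h, Module.finrank_fintype_fun_eq_card] at this
    exact Submodule.finrank_eq_zero.1 (by omega)
  obtain ⟨K, hK, hKl⟩ := LinearMap.exists_antilipschitzWith Z.mulVecLin hker
  refine ⟨K, hK, fun w => ?_⟩
  have := hKl.le_mul_dist w 0
  simpa using this

/-- Frobenius distance of `a ⊗ b` to `θ (â ⊗ b̂)`. -/
def frobDist {n1 n2 : ℕ} (ahat : EuclideanSpace ℝ (Fin n1)) (bhat : EuclideanSpace ℝ (Fin n2))
    (a : EuclideanSpace ℝ (Fin n1)) (b : EuclideanSpace ℝ (Fin n2)) (θ : ℝ) : ℝ :=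
  Real.sqrt (∑ i : Fin n1, ∑ j : Fin n2, (a i * b j - θ * (ahat i * bhat j)) ^ 2)

lemma frobDist_le {n1 n2 : ℕ} (ahat : EuclideanSpace ℝ (Fin n1))
    (bhat : EuclideanSpace ℝ (Fin n2))
    (a : EuclideanSpace ℝ (Fin n1)) (b : EuclideanSpace ℝ (Fin n2)) (θ R : ℝ) (hR : 0 ≤ R)
    (h : ∀ i j, |a i * b j - θ * (ahat i * bhat j)| ≤ R) :
    frobDist ahat bhat a b θ ≤ (n1 * n2 + 1) * R := by
  unfold frobDist
  apply Real.sqrt_le_iff.2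
  refine ⟨by positivity, ?_⟩
  have h1 : ∑ i : Fin n1, ∑ j : Fin n2, (a i * b j - θ * (ahat i * bhat j)) ^ 2
      ≤ ∑ i : Fin n1, ∑ j : Fin n2, R ^ 2 :=
    Finset.sum_le_sum fun i _ => Finset.sum_le_sum fun j _ =>
      sq_le_sq' (by have := (abs_le.1 (h i j)).1; linarith) (abs_le.1 (h i j)).2
  have h2 : ∑ i : Fin n1, ∑ j : Fin n2, R ^ 2 = (n1 * n2) * R ^ 2 := by
    simp; ring
  rw [h2] at h1
  refine h1.trans ?_
  rw [mul_pow]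
  have : (0 : ℝ) ≤ n1 * n2 := by positivity
  gcongr
  nlinarith

lemma local_bound {n1 n2 n3 : ℕ} (hn1 : 0 < n1) (hn2 : 0 < n2) (hn3 : 0 < n3)
    (m : Fin n3 → ℕ)
    (I : (k : Fin n3) → Fin (m k) → Fin n1) (J : (k : Fin n3) → Fin (m k) → Fin n2)
    (hinj : ∀ k : Fin n3, Function.Injective (fun s => (I k s, J k s)))
    (ahat : EuclideanSpace ℝ (Fin n1)) (bhat : EuclideanSpace ℝ (Fin n2))
    (chat : Fin n3 → ℝ)
    (hna : ‖ahat‖ = 1) (hnb : ‖bhat‖ = 1)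
    (Ahat : Fin n1 → Fin n2 → Fin n3 → ℝ)
    (hAhat : ∀ i j k, Ahat i j k = ahat i * bhat j * chat k)
    (Z : Matrix ((Σ k : Fin n3, {p : Fin (m k) × Fin (m k) // p.1 < p.2}) ⊕ Fin 2)
          (Fin n1 ⊕ Fin n2) ℝ)
    (hZ : Z = Matrix.of (Sum.elim
      (fun q : Σ k : Fin n3, {p : Fin (m k) × Fin (m k) // p.1 < p.2} =>
        fun x : Fin n1 ⊕ Fin n2 => Real.sqrt 2 * chat q.1 *
          (Sum.elim
            (fun i => ahat (I q.1 q.2.1.1) * bhat (J q.1 q.2.1.1) * bhat (J q.1 q.2.1.2) *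
                  (if i = I q.1 q.2.1.2 then 1 else 0)
              - ahat (I q.1 q.2.1.2) * bhat (J q.1 q.2.1.2) * bhat (J q.1 q.2.1.1) *
                  (if i = I q.1 q.2.1.1 then 1 else 0))
            (fun j => ahat (I q.1 q.2.1.1) * bhat (J q.1 q.2.1.1) * ahat (I q.1 q.2.1.2) *
                  (if j = J q.1 q.2.1.2 then 1 else 0)
              - ahat (I q.1 q.2.1.2) * bhat (J q.1 q.2.1.2) * ahat (I q.1 q.2.1.1) *
                  (if j = J q.1 q.2.1.1 then 1 else 0)) x))
      ![Sum.elim (fun i => ahat i) (fun _ => 0),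
        Sum.elim (fun _ => 0) (fun j => bhat j)]))
    (hrank : Z.rank = n1 + n2) :
    ∃ C δ : ℝ, 0 < C ∧ 0 < δ ∧
      ∀ (a : EuclideanSpace ℝ (Fin n1)) (b : EuclideanSpace ℝ (Fin n2)),
        ‖a‖ = 1 → ‖b‖ = 1 → ‖a - ahat‖ < δ → ‖b - bhat‖ < δ →
        frobDist ahat bhat a b 1 ≤ C * Real.sqrt (fA m I J Ahat (fun i => a i) (fun j => b j)) := by
  obtain ⟨K, hK, hKw⟩ := exists_lower_bound Z (by rw [hrank]; simp)
  obtain ⟨M, hM0, hM⟩ : ∃ M : ℝ, 0 ≤ M ∧ ∀ k, |chat k| ≤ M :=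
    ⟨∑ k, |chat k|, Finset.sum_nonneg (fun _ _ => abs_nonneg _), fun k =>
      Finset.single_le_sum (f := fun k => |chat k|) (fun _ _ => abs_nonneg _) (Finset.mem_univ k)⟩
  have hac : ∀ i, |ahat i| ≤ 1 := fun i => hna ▸ coord_le ahat i
  have hbc : ∀ i, |bhat i| ≤ 1 := fun i => hnb ▸ coord_le bhat i
  have hAb : ∀ i j k, |Ahat i j k| ≤ M := by
    intro i j k
    rw [hAhat, abs_mul, abs_mul]
    calc |ahat i| * |bhat j| * |chat k| ≤ 1 * 1 * M := by
          gcongr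
          · exact hac i
          · exact hbc j
          · exact hM k
      _ = M := by ring
  set M' : ℝ := 4 * M + n1 + n2 + 1 with hM'
  have hM'0 : 0 < M' := by positivity
  refine ⟨(n1 * n2 + 1) * (2 * (4 * K)), 1 / (2 * K * M'), by positivity, by positivity, ?_⟩
  intro a b ha hb hda hdb
  set g := fA m I J Ahat (fun i => a i) (fun j => b j) with hg
  set w : Fin n1 ⊕ Fin n2 → ℝ := Sum.elim (fun i => a i - ahat i) (fun j => b j - bhat j) with hw
  have hwl : ∀ i, |a i - ahat i| ≤ ‖w‖ := fun i => norm_le_pi_norm w (Sum.inl i)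
  have hwr : ∀ j, |b j - bhat j| ≤ ‖w‖ := fun j => norm_le_pi_norm w (Sum.inr j)
  have hwsmall : ‖w‖ ≤ 1 / (2 * K * M') := by
    refine (pi_norm_le_iff_of_nonneg (by positivity)).2 ?_
    rintro (i | j)
    · exact (coord_le (a - ahat) i).trans hda.le
    · exact (coord_le (b - bhat) j).trans hdb.le
  have hw0 : 0 ≤ ‖w‖ := norm_nonneg w
  have hs2 : Real.sqrt 2 ≤ 2 := by
    rw [Real.sqrt_le_left (by norm_num)]; norm_num
  have hsg : 0 ≤ Real.sqrt g := Real.sqrt_nonneg g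
  have hZw : ‖Z *ᵥ w‖ ≤ 2 * Real.sqrt g + M' * ‖w‖ ^ 2 := by
    refine (pi_norm_le_iff_of_nonneg (by positivity)).2 ?_
    rintro (⟨k, ⟨⟨s, t⟩, hst⟩⟩ | r)
    · have hst' : s < t := hst
      have hrow : (Z *ᵥ w) (Sum.inl ⟨k, ⟨⟨s, t⟩, hst⟩⟩) = Real.sqrt 2 *
          ((Ahat (I k s) (J k s) k * a (I k t) * b (J k t)
            - Ahat (I k t) (J k t) k * a (I k s) * b (J k s))
          - (Ahat (I k s) (J k s) k * (a (I k t) - ahat (I k t)) * (b (J k t) - bhat (J k t))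
            - Ahat (I k t) (J k t) k * (a (I k s) - ahat (I k s)) * (b (J k s) - bhat (J k s)))) := by
        simp only [hZ, hw, Matrix.mulVec, dotProduct, Fintype.sum_sum_type, Matrix.of_apply,
          Sum.elim_inl, Sum.elim_inr, mul_sub, sub_mul, Finset.sum_sub_distrib, mul_ite, ite_mul,
          mul_one, mul_zero, zero_mul, Finset.sum_ite_eq', Finset.mem_univ, if_true, hAhat]
        ring
      have h1 := Real.abs_le_sqrt (term_sq_le_fA m I J Ahat (fun i => a i) (fun j => b j) k s t hst')
      have h2 : ∀ s t, |Ahat (I k s) (J k s) k * (a (I k t) - ahat (I k t)) * (b (J k t) - bhat (J k t))|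
          ≤ M * ‖w‖ * ‖w‖ := by
        intro s t
        rw [abs_mul, abs_mul]
        gcongr
        · exact hAb _ _ _
        · exact hwl _
        · exact hwr _
      rw [hrow, Real.norm_eq_abs, abs_mul, abs_of_nonneg (Real.sqrt_nonneg 2)]
      have h3 := abs_sub (Ahat (I k s) (J k s) k * a (I k t) * b (J k t)
            - Ahat (I k t) (J k t) k * a (I k s) * b (J k s)) (Ahat (I k s) (J k s) k * (a (I k t) - ahat (I k t)) * (b (J k t) - bhat (J k t))
            - Ahat (I k t) (J k t) k * (a (I k s) - ahat (I k s)) * (b (J k s) - bhat (J k s)))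
      have h4 := abs_sub (Ahat (I k s) (J k s) k * (a (I k t) - ahat (I k t)) * (b (J k t) - bhat (J k t)))
            (Ahat (I k t) (J k t) k * (a (I k s) - ahat (I k s)) * (b (J k s) - bhat (J k s)))
      have h5 := h2 s t
      have h6 := h2 t s
      have h7 : |(Ahat (I k s) (J k s) k * a (I k t) * b (J k t)
            - Ahat (I k t) (J k t) k * a (I k s) * b (J k s))
          - (Ahat (I k s) (J k s) k * (a (I k t) - ahat (I k t)) * (b (J k t) - bhat (J k t))
            - Ahat (I k t) (J k t) k * (a (I k s) - ahat (I k s)) * (b (J k s) - bhat (J k s)))|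
          ≤ Real.sqrt g + 2 * (M * ‖w‖ * ‖w‖) := by
        have h8 := h2 t s
        linarith
      refine (mul_le_mul hs2 h7 (abs_nonneg _) (by norm_num)).trans ?_
      have h9 : 0 ≤ (n1 + n2 + 1 : ℝ) * ‖w‖ ^ 2 := by positivity
      rw [hM']
      nlinarith
    · have hsq : ∀ (n : ℕ) (x : Fin n → ℝ), (∀ i, |x i| ≤ ‖w‖) →
          |-(∑ i, x i ^ 2) / 2| ≤ n * ‖w‖ ^ 2 := by
        intro n x hx
        have h1 : ∑ i, x i ^ 2 ≤ ∑ i : Fin n, ‖w‖ ^ 2 := Finset.sum_le_sum fun i _ =>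
          sq_le_sq' (by have := (abs_le.1 (hx i)).1; linarith) (abs_le.1 (hx i)).2
        have h0 : 0 ≤ ∑ i, x i ^ 2 := Finset.sum_nonneg fun i _ => sq_nonneg _
        simp only [Finset.sum_const, Finset.card_univ, Fintype.card_fin, nsmul_eq_mul] at h1
        rw [abs_le]
        constructor <;> linarith
      have hn1' : (0 : ℝ) ≤ n1 * ‖w‖ ^ 2 := by positivity
      have hn2' : (0 : ℝ) ≤ n2 * ‖w‖ ^ 2 := by positivity
      have hMw : (0 : ℝ) ≤ M * ‖w‖ ^ 2 := by positivity
      fin_cases r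
      · have hrow : (Z *ᵥ w) (Sum.inr 0) = -(∑ i, (a i - ahat i) ^ 2) / 2 := by
          rw [← self_inner_sub ahat a hna ha]
          simp [hZ, hw, Matrix.mulVec, dotProduct, Fintype.sum_sum_type]
        have h1 := hsq n1 (fun i => a i - ahat i) hwl
        change ‖(Z *ᵥ w) (Sum.inr 0)‖ ≤ _
        rw [hrow, Real.norm_eq_abs, hM']
        nlinarith [sq_nonneg ‖w‖]
      · have hrow : (Z *ᵥ w) (Sum.inr 1) = -(∑ i, (b i - bhat i) ^ 2) / 2 := by
          rw [← self_inner_sub bhat b hnb hb]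
          simp [hZ, hw, Matrix.mulVec, dotProduct, Fintype.sum_sum_type]
        have h1 := hsq n2 (fun i => b i - bhat i) hwr
        change ‖(Z *ᵥ w) (Sum.inr 1)‖ ≤ _
        rw [hrow, Real.norm_eq_abs, hM']
        nlinarith [sq_nonneg ‖w‖]
  have hmain := hKw w
  have hwfin : ‖w‖ ≤ 4 * K * Real.sqrt g := by
    have h1 : ‖w‖ * (2 * K * M') ≤ 1 := by
      rwa [le_div_iff₀ (by positivity)] at hwsmall
    have h2 := mul_le_mul_of_nonneg_left hZw hK.le
    nlinarith
  refine (frobDist_le ahat bhat a b 1 (2 * ‖w‖) (by positivity) ?_).trans ?_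
  · intro i j
    have hbj : |b j| ≤ 1 := hb ▸ coord_le b j
    have e : a i * b j - 1 * (ahat i * bhat j) = (a i - ahat i) * b j + ahat i * (b j - bhat j) := by
      ring
    rw [e]
    refine (abs_add_le _ _).trans ?_
    rw [abs_mul, abs_mul]
    have h1 : |a i - ahat i| * |b j| ≤ ‖w‖ * 1 := by
      gcongr
      exact hwl i
    have h2 : |ahat i| * |b j - bhat j| ≤ 1 * ‖w‖ := by
      gcongr
      · exact hac i
      · exact hwr j
    linarith
  · have h1 : 2 * ‖w‖ ≤ 2 * (4 * K) * Real.sqrt g := by linarith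
    rw [mul_assoc]
    exact mul_le_mul_of_nonneg_left h1 (by positivity)

theorem stmt0 {n1 n2 n3 : ℕ} (hn1 : 0 < n1) (hn2 : 0 < n2) (hn3 : 0 < n3)
    (m : Fin n3 → ℕ)
    (I : (k : Fin n3) → Fin (m k) → Fin n1) (J : (k : Fin n3) → Fin (m k) → Fin n2)
    (hinj : ∀ k : Fin n3, Function.Injective (fun s => (I k s, J k s)))
    (ahat : EuclideanSpace ℝ (Fin n1)) (bhat : EuclideanSpace ℝ (Fin n2))
    (chat : Fin n3 → ℝ)
    (hna : ‖ahat‖ = 1) (hnb : ‖bhat‖ = 1)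
    (Ahat : Fin n1 → Fin n2 → Fin n3 → ℝ)
    (hAhat : ∀ i j k, Ahat i j k = ahat i * bhat j * chat k)
    (Z : Matrix ((Σ k : Fin n3, {p : Fin (m k) × Fin (m k) // p.1 < p.2}) ⊕ Fin 2)
          (Fin n1 ⊕ Fin n2) ℝ)
    (hZ : Z = Matrix.of (Sum.elim
      (fun q : Σ k : Fin n3, {p : Fin (m k) × Fin (m k) // p.1 < p.2} =>
        fun x : Fin n1 ⊕ Fin n2 => Real.sqrt 2 * chat q.1 *
          (Sum.elim
            (fun i => ahat (I q.1 q.2.1.1) * bhat (J q.1 q.2.1.1) * bhat (J q.1 q.2.1.2) *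
                  (if i = I q.1 q.2.1.2 then 1 else 0)
              - ahat (I q.1 q.2.1.2) * bhat (J q.1 q.2.1.2) * bhat (J q.1 q.2.1.1) *
                  (if i = I q.1 q.2.1.1 then 1 else 0))
            (fun j => ahat (I q.1 q.2.1.1) * bhat (J q.1 q.2.1.1) * ahat (I q.1 q.2.1.2) *
                  (if j = J q.1 q.2.1.2 then 1 else 0)
              - ahat (I q.1 q.2.1.2) * bhat (J q.1 q.2.1.2) * ahat (I q.1 q.2.1.1) *
                  (if j = J q.1 q.2.1.1 then 1 else 0)) x))
      ![Sum.elim (fun i => ahat i) (fun _ => 0),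
        Sum.elim (fun _ => 0) (fun j => bhat j)]))
    (hrank : Z.rank = n1 + n2)
    (hzeros : ∀ (a : EuclideanSpace ℝ (Fin n1)) (b : EuclideanSpace ℝ (Fin n2)),
      ‖a‖ = 1 → ‖b‖ = 1 →
      (∀ (k : Fin n3) (s t : Fin (m k)), s < t →
        Ahat (I k s) (J k s) k * a (I k t) * b (J k t)
          - Ahat (I k t) (J k t) k * a (I k s) * b (J k s) = 0) →
      ((a = ahat ∧ b = bhat) ∨ (a = ahat ∧ b = -bhat) ∨
       (a = -ahat ∧ b = bhat) ∨ (a = -ahat ∧ b = -bhat))) :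
    ∃ C1 : ℝ, 0 < C1 ∧ ∃ ε : ℝ, 0 < ε ∧
      ∀ A : Fin n1 → Fin n2 → Fin n3 → ℝ,
        normOmega m I J (A - Ahat) ≤ ε →
        ∀ (astar : EuclideanSpace ℝ (Fin n1)) (bstar : EuclideanSpace ℝ (Fin n2)),
          ‖astar‖ = 1 → ‖bstar‖ = 1 →
          (∀ (a : EuclideanSpace ℝ (Fin n1)) (b : EuclideanSpace ℝ (Fin n2)),
            ‖a‖ = 1 → ‖b‖ = 1 →
            fA m I J A (fun i => astar i) (fun j => bstar j)
              ≤ fA m I J A (fun i => a i) (fun j => b j)) →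
          ∃ θ : ℝ, (θ = 1 ∨ θ = -1) ∧
            Real.sqrt (∑ i : Fin n1, ∑ j : Fin n2,
                (astar i * bstar j - θ * (ahat i * bhat j)) ^ 2)
              ≤ C1 * normOmega m I J (A - Ahat) := by
  obtain ⟨C, δ, hC, hδ, hloc⟩ := local_bound hn1 hn2 hn3 m I J hinj ahat bhat chat hna hnb Ahat
    hAhat Z hZ hrank
  have hac : ∀ i, |ahat i| ≤ 1 := fun i => hna ▸ coord_le ahat i
  have hbc : ∀ i, |bhat i| ≤ 1 := fun i => hnb ▸ coord_le bhat i
  -- the local bound near any of the four signed solutions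
  have hloc' : ∀ (σ τ : ℝ), (σ = 1 ∨ σ = -1) → (τ = 1 ∨ τ = -1) →
      ∀ (a : EuclideanSpace ℝ (Fin n1)) (b : EuclideanSpace ℝ (Fin n2)),
        ‖a‖ = 1 → ‖b‖ = 1 → ‖a - σ • ahat‖ < δ → ‖b - τ • bhat‖ < δ →
        frobDist ahat bhat a b (σ * τ) ≤
          C * Real.sqrt (fA m I J Ahat (fun i => a i) (fun j => b j)) := by
    intro σ τ hσ hτ a b ha hb hda hdb
    have hσ2 : σ * σ = 1 := by rcases hσ with h | h <;> rw [h] <;> norm_num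
    have hτ2 : τ * τ = 1 := by rcases hτ with h | h <;> rw [h] <;> norm_num
    have hσn : ‖σ‖ = 1 := by rcases hσ with h | h <;> rw [h] <;> simp
    have hτn : ‖τ‖ = 1 := by rcases hτ with h | h <;> rw [h] <;> simp
    have e1 : σ • a - ahat = σ • (a - σ • ahat) := by
      rw [smul_sub, smul_smul, hσ2, one_smul]
    have e2 : τ • b - bhat = τ • (b - τ • bhat) := by
      rw [smul_sub, smul_smul, hτ2, one_smul]
    have key := hloc (σ • a) (τ • b) (by rw [norm_smul, hσn, ha, one_mul])
      (by rw [norm_smul, hτn, hb, one_mul])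
      (by rwa [e1, norm_smul, hσn, one_mul]) (by rwa [e2, norm_smul, hτn, one_mul])
    have e3 : frobDist ahat bhat (σ • a) (τ • b) 1 = frobDist ahat bhat a b (σ * τ) := by
      unfold frobDist
      congr 1
      refine Finset.sum_congr rfl fun i _ => Finset.sum_congr rfl fun j _ => ?_
      simp only [PiLp.smul_apply, smul_eq_mul]
      rcases hσ with h | h <;> rcases hτ with h' | h' <;> rw [h, h'] <;> ring
    have e4 : fA m I J Ahat (fun i => (σ • a) i) (fun j => (τ • b) j)
        = fA m I J Ahat (fun i => a i) (fun j => b j) := by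
      unfold fA
      refine Finset.sum_congr rfl fun k _ => Finset.sum_congr rfl fun s _ =>
        Finset.sum_congr rfl fun t _ => ?_
      simp only [PiLp.smul_apply, smul_eq_mul]
      rcases hσ with h | h <;> rcases hτ with h' | h' <;> rw [h, h'] <;> congr 1 <;> ring
    rwa [e3, e4] at key
  -- compactness away from the four solutions
  let g : EuclideanSpace ℝ (Fin n1) × EuclideanSpace ℝ (Fin n2) → ℝ :=
    fun p => fA m I J Ahat (fun i => p.1 i) (fun j => p.2 j)
  have hgc : Continuous g := by
    simp only [g, fA]
    refine continuous_finsetSum _ fun k _ => continuous_finsetSum _ fun s _ =>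
      continuous_finsetSum _ fun t _ => ?_
    split_ifs <;> fun_prop
  let U : ℝ → ℝ → Set (EuclideanSpace ℝ (Fin n1) × EuclideanSpace ℝ (Fin n2)) :=
    fun σ τ => {p | ‖p.1 - σ • ahat‖ < δ ∧ ‖p.2 - τ • bhat‖ < δ}
  have hU : ∀ σ τ, IsOpen (U σ τ) := by
    intro σ τ
    have h1 : Continuous fun p : EuclideanSpace ℝ (Fin n1) × EuclideanSpace ℝ (Fin n2) =>
      ‖p.1 - σ • ahat‖ := by fun_prop
    have h2 : Continuous fun p : EuclideanSpace ℝ (Fin n1) × EuclideanSpace ℝ (Fin n2) =>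
      ‖p.2 - τ • bhat‖ := by fun_prop
    exact (isOpen_lt h1 continuous_const).inter (isOpen_lt h2 continuous_const)
  have hcomp : IsCompact ((Metric.sphere (0 : EuclideanSpace ℝ (Fin n1)) 1 ×ˢ
      Metric.sphere (0 : EuclideanSpace ℝ (Fin n2)) 1) \
      (U 1 1 ∪ U 1 (-1) ∪ U (-1) 1 ∪ U (-1) (-1))) :=
    ((isCompact_sphere _ _).prod (isCompact_sphere _ _)).diff
      ((((hU _ _).union (hU _ _)).union (hU _ _)).union (hU _ _))
  obtain ⟨μ, hμ, hμg⟩ := hcomp.exists_forall_le' hgc.continuousOn (a := 0) (by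
    rintro ⟨a, b⟩ ⟨⟨ha, hb⟩, hnot⟩
    have ha1 : ‖a‖ = 1 := by simpa using ha
    have hb1 : ‖b‖ = 1 := by simpa using hb
    by_contra hle
    have hz := hzeros a b ha1 hb1 (fun k s t hst => by
      have h1 := term_sq_le_fA m I J Ahat (fun i => a i) (fun j => b j) k s t hst
      have h2 : fA m I J Ahat (fun i => a i) (fun j => b j) ≤ 0 := not_lt.1 hle
      exact pow_eq_zero_iff (two_ne_zero) |>.1 (le_antisymm (h1.trans h2) (sq_nonneg _)))
    apply hnot
    rcases hz with ⟨h, h'⟩ | ⟨h, h'⟩ | ⟨h, h'⟩ | ⟨h, h'⟩ <;> simp [U, h, h', hδ])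
  -- global error bound
  set C' : ℝ := C + (n1 * n2 + 1) * 2 / Real.sqrt μ with hC'
  have hsμ : 0 < Real.sqrt μ := Real.sqrt_pos.2 hμ
  have hC'0 : 0 < C' := by positivity
  have hglob : ∀ (a : EuclideanSpace ℝ (Fin n1)) (b : EuclideanSpace ℝ (Fin n2)),
      ‖a‖ = 1 → ‖b‖ = 1 → ∃ θ : ℝ, (θ = 1 ∨ θ = -1) ∧ frobDist ahat bhat a b θ ≤
          C' * Real.sqrt (fA m I J Ahat (fun i => a i) (fun j => b j)) := by
    intro a b ha hb
    have hCC : C * Real.sqrt (fA m I J Ahat (fun i => a i) (fun j => b j)) ≤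
        C' * Real.sqrt (fA m I J Ahat (fun i => a i) (fun j => b j)) := by
      refine mul_le_mul_of_nonneg_right ?_ (Real.sqrt_nonneg _)
      rw [hC']
      have : 0 ≤ (n1 * n2 + 1) * 2 / Real.sqrt μ := by positivity
      linarith
    by_cases hp : (a, b) ∈ U 1 1 ∪ U 1 (-1) ∪ U (-1) 1 ∪ U (-1) (-1)
    · rcases hp with ((hp | hp) | hp) | hp
      · exact ⟨1 * 1, by norm_num, (hloc' 1 1 (by norm_num) (by norm_num) a b ha hb hp.1 hp.2).trans hCC⟩
      · exact ⟨1 * -1, by norm_num,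
          (hloc' 1 (-1) (by norm_num) (by norm_num) a b ha hb hp.1 hp.2).trans hCC⟩
      · exact ⟨-1 * 1, by norm_num,
          (hloc' (-1) 1 (by norm_num) (by norm_num) a b ha hb hp.1 hp.2).trans hCC⟩
      · exact ⟨-1 * -1, by norm_num,
          (hloc' (-1) (-1) (by norm_num) (by norm_num) a b ha hb hp.1 hp.2).trans hCC⟩
    · have h1 : μ ≤ fA m I J Ahat (fun i => a i) (fun j => b j) :=
        hμg (a, b) ⟨⟨by simpa using ha, by simpa using hb⟩, hp⟩
      have h2 := Real.sqrt_le_sqrt h1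
      refine ⟨1, Or.inl rfl, (frobDist_le ahat bhat a b 1 2 (by norm_num) ?_).trans ?_⟩
      · intro i j
        have h3 := abs_resid_le 1 1 (a i) (b j) (ahat i) (bhat j) 1 (by simp) (by simp)
          (ha ▸ coord_le a i) (hb ▸ coord_le b j) (hac i) (hbc j)
        have e : a i * b j - 1 * (ahat i * bhat j) = 1 * a i * b j - 1 * ahat i * bhat j := by ring
        rw [e]
        linarith
      · calc ((n1 : ℝ) * n2 + 1) * 2 = ((n1 * n2 + 1) * 2 / Real.sqrt μ) * Real.sqrt μ := by
              field_simp
          _ ≤ C' * Real.sqrt (fA m I J Ahat (fun i => a i) (fun j => b j)) := by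
              refine mul_le_mul ?_ h2 hsμ.le hC'0.le
              rw [hC']
              linarith
  -- perturbation
  set N : ℝ := ∑ k : Fin n3, (m k : ℝ) ^ 2 with hN
  have hN0 : 0 ≤ N := Finset.sum_nonneg fun k _ => sq_nonneg _
  refine ⟨C' * (Real.sqrt N * (Real.sqrt N * 2 + 2)) + 1, by positivity, 1, one_pos, ?_⟩
  intro A _ astar bstar ha hb hmin
  obtain ⟨θ, hθ, hbound⟩ := hglob astar bstar ha hb
  refine ⟨θ, hθ, hbound.trans ?_⟩
  set d := normOmega m I J (A - Ahat) with hd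
  have hd0 : 0 ≤ d := Real.sqrt_nonneg _
  have hD : ∀ k s, |A (I k s) (J k s) k - Ahat (I k s) (J k s) k| ≤ d :=
    fun k s => abs_le_normOmega m I J (A - Ahat) k s
  have hf1 : fA m I J A (fun i => ahat i) (fun j => bhat j) ≤ N * (2 * d) ^ 2 := by
    refine fA_le m I J A _ _ _ fun k s t _ => ?_
    have := abs_resid_le _ _ _ _ _ _ d (hD k s) (hD k t) (hac (I k t)) (hbc (J k t))
      (hac (I k s)) (hbc (J k s))
    convert this using 2
    rw [hAhat, hAhat]
    ring
  have hf2 := (hmin ahat bhat hna hnb).trans hf1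
  have hf3 : fA m I J Ahat (fun i => astar i) (fun j => bstar j) ≤
      N * ((Real.sqrt N * 2 + 2) * d) ^ 2 := by
    refine fA_le m I J Ahat _ _ _ fun k s t hst => ?_
    have h1 := abs_resid_le _ _ _ _ _ _ d (hD k s) (hD k t) (ha ▸ coord_le astar (I k t))
      (hb ▸ coord_le bstar (J k t)) (ha ▸ coord_le astar (I k s)) (hb ▸ coord_le bstar (J k s))
    have h2 := Real.abs_le_sqrt ((term_sq_le_fA m I J A (fun i => astar i) (fun j => bstar j)
      k s t hst).trans hf2)
    rw [Real.sqrt_mul hN0, Real.sqrt_sq (by positivity)] at h2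
    rw [abs_le] at h1 h2 ⊢
    constructor <;> linarith [h1.1, h1.2, h2.1, h2.2]
  have hf4 := Real.sqrt_le_sqrt hf3
  rw [Real.sqrt_mul hN0, Real.sqrt_sq (by positivity)] at hf4
  have hf5 := mul_le_mul_of_nonneg_left hf4 hC'0.le
  linarith
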